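/- The covariant derivative of τ with respect to its generalized Levi-Civita connection differs from the g-covariant derivative of the antisymmetric part ω by an explicit torsion term: for all indices μ, α, ν and all x ∈ U, ∂_μ τ_{αν} − Σ_β Γ^β_{μα} τ_{βν} − Σ_β Γ^β_{μν} τ_{αβ} = (∂_μ ω_{αν} − Σ_β Γg^β_{μα} ω_{βν} − Σ_β Γg^β_{μν} ω_{αβ}) − (1/2) Σ_β (T^β_{μα} ω_{βν} + T^β_{μν} ω_{αβ}), where Γg^α_{μβ} := (1/2) Σ_δ g^{αδ} (∂_μ g_{βδ} + ∂_β g_{δμ} − ∂_δ g_{βμ}) are the Christoffel symbols of g and T^β_{μα} := Γ^β_{μα} − Γ^β_{αμ} is the torsion of τ. -/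

import Mathlib

open scoped BigOperators

/-- The partial derivative `∂_μ f` of `f : ℝⁿ → ℝ` in the `μ`-th coordinate direction. -/
noncomputable def pd {n : ℕ} (μ : Fin n) (f : (Fin n → ℝ) → ℝ) (x : Fin n → ℝ) : ℝ :=
  fderiv ℝ f x (Pi.single μ 1)

/-- The symmetric part `g_{μν} = (τ_{μν} + τ_{νμ})/2` of `τ`. -/
noncomputable def gPart {n : ℕ} (τ : (Fin n → ℝ) → Matrix (Fin n) (Fin n) ℝ)
    (x : Fin n → ℝ) : Matrix (Fin n) (Fin n) ℝ :=
  fun μ ν => (τ x μ ν + τ x ν μ) / 2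

/-- The antisymmetric part `ω_{μν} = (τ_{μν} - τ_{νμ})/2` of `τ`. -/
noncomputable def wPart {n : ℕ} (τ : (Fin n → ℝ) → Matrix (Fin n) (Fin n) ℝ)
    (x : Fin n → ℝ) : Matrix (Fin n) (Fin n) ℝ :=
  fun μ ν => (τ x μ ν - τ x ν μ) / 2

/-- The entries `g^{μν}` of the inverse matrix `g(x)⁻¹`. -/
noncomputable def gInv {n : ℕ} (τ : (Fin n → ℝ) → Matrix (Fin n) (Fin n) ℝ)
    (x : Fin n → ℝ) : Matrix (Fin n) (Fin n) ℝ :=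
  (gPart τ x)⁻¹

/-- The generalized Christoffel symbols
`Γ^α_{μβ} = (1/2) Σ_δ g^{αδ} (∂_μ τ_{βδ} + ∂_β τ_{δμ} − ∂_δ τ_{βμ})` of `τ`. -/
noncomputable def GammaT {n : ℕ} (τ : (Fin n → ℝ) → Matrix (Fin n) (Fin n) ℝ)
    (α μ β : Fin n) (x : Fin n → ℝ) : ℝ :=
  (1 / 2) * ∑ δ, gInv τ x α δ *
    (pd μ (fun y => τ y β δ) x + pd β (fun y => τ y δ μ) x - pd δ (fun y => τ y β μ) x)

/-- The classical Christoffel symbols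
`Γg^α_{μβ} = (1/2) Σ_δ g^{αδ} (∂_μ g_{βδ} + ∂_β g_{δμ} − ∂_δ g_{βμ})`
of the symmetric part `g` of `τ`. -/
noncomputable def GammaG {n : ℕ} (τ : (Fin n → ℝ) → Matrix (Fin n) (Fin n) ℝ)
    (α μ β : Fin n) (x : Fin n → ℝ) : ℝ :=
  (1 / 2) * ∑ δ, gInv τ x α δ *
    (pd μ (fun y => gPart τ y β δ) x + pd β (fun y => gPart τ y δ μ) x -
      pd δ (fun y => gPart τ y β μ) x)

/-!
Write `τ = g + ω`, let `∇` be the covariant derivative given by the generalized Christoffel symbols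
`Γ` and `∇'` the one given by the Christoffel symbols `Γg` of `g`. Lowering the upper index of
`Γ^β_{μα}` with `g` and adding the result of exchanging `α` and `ν`, all terms cancel except
`∂_μ g_{αν}`: thus `∇ g = 0`, even though `Γ` has torsion, and `∇ τ = ∇ ω`. On the other hand
`Γg` is the symmetrization of `Γ` in its lower indices, that is, `Γ = Γg + T / 2`, and passing from
`∇ ω` to `∇' ω` produces the torsion term.
-/

section

variable {n : ℕ}

/-- The covariant derivative `∇_μ t_{αν}` of a field `t` of bilinear forms with respect to the
connection whose coefficients are `Γ^α_{μβ} = Γ α μ β`; the direction of differentiation is the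
first lower index. -/
noncomputable def covDeriv (Γ : Fin n → Fin n → Fin n → (Fin n → ℝ) → ℝ)
    (t : (Fin n → ℝ) → Matrix (Fin n) (Fin n) ℝ) (μ α ν : Fin n) (x : Fin n → ℝ) : ℝ :=
  pd μ (fun y => t y α ν) x - (∑ β, Γ β μ α x * t x β ν) - (∑ β, Γ β μ ν x * t x α β)

/-- The torsion `T^β_{μα} = Γ^β_{μα} - Γ^β_{αμ}` of the connection with coefficients `Γ`. -/
def connectionTorsion (Γ : Fin n → Fin n → Fin n → (Fin n → ℝ) → ℝ)
    (β μ α : Fin n) (x : Fin n → ℝ) : ℝ :=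
  Γ β μ α x - Γ β α μ x

/-- The generalized Christoffel symbols of the first kind `Γ_{δμβ}` of `τ`, that is, the symbols
`Γ^α_{μβ}` with the upper index lowered by the symmetric part of `τ`. The lowered index `δ` is the
last argument, so that raising it is a matrix-vector product. -/
noncomputable def christoffelFirstKind (τ : (Fin n → ℝ) → Matrix (Fin n) (Fin n) ℝ)
    (μ β : Fin n) (x : Fin n → ℝ) (δ : Fin n) : ℝ :=
  (1 / 2) * (pd μ (fun y => τ y β δ) x + pd β (fun y => τ y δ μ) x - pd δ (fun y => τ y β μ) x)

variable {x : Fin n → ℝ}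

theorem pd_add {f h : (Fin n → ℝ) → ℝ} (hf : DifferentiableAt ℝ f x)
    (hh : DifferentiableAt ℝ h x) (μ : Fin n) :
    pd μ (fun y => f y + h y) x = pd μ f x + pd μ h x := by
  simp only [pd, fderiv_fun_add hf hh, add_apply]

theorem pd_div_const (f : (Fin n → ℝ) → ℝ) (c : ℝ) (μ : Fin n) :
    pd μ (fun y => f y / c) x = pd μ f x / c := by
  have div_eq_smul : (fun y => f y / c) = c⁻¹ • f := by
    ext y
    rw [Pi.smul_apply, smul_eq_mul, div_eq_inv_mul]
  rw [pd, pd, div_eq_smul, fderiv_const_smul_field, Pi.smul_apply, smul_apply, smul_eq_mul,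
    div_eq_inv_mul]

theorem covDeriv_add (Γ : Fin n → Fin n → Fin n → (Fin n → ℝ) → ℝ)
    {s t : (Fin n → ℝ) → Matrix (Fin n) (Fin n) ℝ} {α ν : Fin n}
    (hs : DifferentiableAt ℝ (fun y => s y α ν) x)
    (ht : DifferentiableAt ℝ (fun y => t y α ν) x) (μ : Fin n) :
    covDeriv Γ (s + t) μ α ν x = covDeriv Γ s μ α ν x + covDeriv Γ t μ α ν x := by
  simp only [covDeriv, Pi.add_apply, Matrix.add_apply, pd_add hs ht, mul_add,
    Finset.sum_add_distrib]
  ring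

theorem covDeriv_sub_covDeriv (Γ Γ' : Fin n → Fin n → Fin n → (Fin n → ℝ) → ℝ)
    (t : (Fin n → ℝ) → Matrix (Fin n) (Fin n) ℝ) (μ α ν : Fin n) :
    covDeriv Γ t μ α ν x - covDeriv Γ' t μ α ν x =
      -∑ β, ((Γ β μ α x - Γ' β μ α x) * t x β ν + (Γ β μ ν x - Γ' β μ ν x) * t x α β) := by
  simp only [covDeriv, sub_mul, Finset.sum_add_distrib, Finset.sum_sub_distrib]
  ring

variable (τ : (Fin n → ℝ) → Matrix (Fin n) (Fin n) ℝ)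

theorem gPart_add_wPart : gPart τ + wPart τ = τ := by
  ext y i j
  simp only [Pi.add_apply, Matrix.add_apply, gPart, wPart]
  ring

theorem isSymm_gPart : (gPart τ x).IsSymm := by
  ext μ ν
  simp only [Matrix.transpose_apply, gPart, add_comm]

theorem GammaT_eq_mulVec (α μ β : Fin n) :
    GammaT τ α μ β x = (gInv τ x).mulVec (christoffelFirstKind τ μ β x) α := by
  simp only [GammaT, Matrix.mulVec, dotProduct, christoffelFirstKind, Finset.mul_sum,
    mul_left_comm]

theorem GammaG_eq_mulVec (α μ β : Fin n) :
    GammaG τ α μ β x = (gInv τ x).mulVec (christoffelFirstKind (gPart τ) μ β x) α := by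
  simp only [GammaG, Matrix.mulVec, dotProduct, christoffelFirstKind, Finset.mul_sum,
    mul_left_comm]

variable {τ}

theorem sum_GammaT_mul_gPart (hg : IsUnit (gPart τ x).det) (μ α ν : Fin n) :
    ∑ β, GammaT τ β μ α x * gPart τ x β ν = christoffelFirstKind τ μ α x ν :=
  calc ∑ β, GammaT τ β μ α x * gPart τ x β ν
      = (gPart τ x).mulVec ((gInv τ x).mulVec (christoffelFirstKind τ μ α x)) ν :=
        Finset.sum_congr rfl fun β _ => by
          rw [GammaT_eq_mulVec, ← (isSymm_gPart τ).apply, mul_comm]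
    _ = christoffelFirstKind τ μ α x ν := by
        rw [Matrix.mulVec_mulVec, gInv, Matrix.mul_nonsing_inv _ hg, Matrix.one_mulVec]

theorem differentiableAt_gPart {α β : Fin n} (hαβ : DifferentiableAt ℝ (fun y => τ y α β) x)
    (hβα : DifferentiableAt ℝ (fun y => τ y β α) x) :
    DifferentiableAt ℝ (fun y => gPart τ y α β) x := by
  simp only [gPart, div_eq_mul_inv]
  exact (hαβ.add hβα).mul_const _

theorem differentiableAt_wPart {α β : Fin n} (hαβ : DifferentiableAt ℝ (fun y => τ y α β) x)
    (hβα : DifferentiableAt ℝ (fun y => τ y β α) x) :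
    DifferentiableAt ℝ (fun y => wPart τ y α β) x := by
  simp only [wPart, div_eq_mul_inv]
  exact (hαβ.sub hβα).mul_const _

theorem pd_gPart {α β : Fin n} (hαβ : DifferentiableAt ℝ (fun y => τ y α β) x)
    (hβα : DifferentiableAt ℝ (fun y => τ y β α) x) (μ : Fin n) :
    pd μ (fun y => gPart τ y α β) x =
      (pd μ (fun y => τ y α β) x + pd μ (fun y => τ y β α) x) / 2 := by
  simp only [gPart, pd_div_const, pd_add hαβ hβα]

theorem christoffelFirstKind_gPart
    (hτ : ∀ α β, DifferentiableAt ℝ (fun y => τ y α β) x) (μ β : Fin n) :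
    christoffelFirstKind (gPart τ) μ β x =
      (1 / 2 : ℝ) • (christoffelFirstKind τ μ β x + christoffelFirstKind τ β μ x) := by
  ext δ
  simp only [christoffelFirstKind, pd_gPart (hτ _ _) (hτ _ _), Pi.smul_apply, Pi.add_apply,
    smul_eq_mul]
  ring

theorem christoffelFirstKind_add_swap {α ν : Fin n}
    (hαν : DifferentiableAt ℝ (fun y => τ y α ν) x)
    (hνα : DifferentiableAt ℝ (fun y => τ y ν α) x) (μ : Fin n) :
    christoffelFirstKind τ μ α x ν + christoffelFirstKind τ μ ν x α =
      pd μ (fun y => gPart τ y α ν) x := by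
  rw [pd_gPart hαν hνα]
  simp only [christoffelFirstKind]
  ring

theorem GammaG_eq_symmetrization_GammaT
    (hτ : ∀ α β, DifferentiableAt ℝ (fun y => τ y α β) x) (β μ α : Fin n) :
    GammaG τ β μ α x = (1 / 2) * (GammaT τ β μ α x + GammaT τ β α μ x) := by
  simp only [GammaG_eq_mulVec, GammaT_eq_mulVec, christoffelFirstKind_gPart hτ,
    Matrix.mulVec_smul, Matrix.mulVec_add, Pi.smul_apply, Pi.add_apply, smul_eq_mul]

theorem GammaT_sub_GammaG
    (hτ : ∀ α β, DifferentiableAt ℝ (fun y => τ y α β) x) (β μ α : Fin n) :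
    GammaT τ β μ α x - GammaG τ β μ α x = (1 / 2) * connectionTorsion (GammaT τ) β μ α x := by
  rw [GammaG_eq_symmetrization_GammaT hτ, connectionTorsion]
  ring

theorem covDeriv_GammaT_gPart (hτ : ∀ α β, DifferentiableAt ℝ (fun y => τ y α β) x)
    (hg : IsUnit (gPart τ x).det) (μ α ν : Fin n) :
    covDeriv (GammaT τ) (gPart τ) μ α ν x = 0 := by
  have lower_right : ∑ β, GammaT τ β μ ν x * gPart τ x α β = christoffelFirstKind τ μ ν x α := by
    rw [← sum_GammaT_mul_gPart hg]
    exact Finset.sum_congr rfl fun β _ => by rw [(isSymm_gPart τ).apply]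
  rw [covDeriv, sum_GammaT_mul_gPart hg, lower_right,
    ← christoffelFirstKind_add_swap (hτ α ν) (hτ ν α)]
  ring

theorem covDeriv_GammaT_eq_covDeriv_GammaG_sub_torsion
    (hτ : ∀ α β, DifferentiableAt ℝ (fun y => τ y α β) x)
    (t : (Fin n → ℝ) → Matrix (Fin n) (Fin n) ℝ) (μ α ν : Fin n) :
    covDeriv (GammaT τ) t μ α ν x = covDeriv (GammaG τ) t μ α ν x -
      (1 / 2) * ∑ β, (connectionTorsion (GammaT τ) β μ α x * t x β ν +
        connectionTorsion (GammaT τ) β μ ν x * t x α β) := by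
  have diff := covDeriv_sub_covDeriv (x := x) (GammaT τ) (GammaG τ) t μ α ν
  simp only [GammaT_sub_GammaG hτ, mul_assoc, ← mul_add, ← Finset.mul_sum] at diff
  linarith

end

theorem statement8_general {n : ℕ} {x : Fin n → ℝ}
    {τ : (Fin n → ℝ) → Matrix (Fin n) (Fin n) ℝ}
    (hτ : ∀ α β, DifferentiableAt ℝ (fun y => τ y α β) x)
    (hg : IsUnit (gPart τ x).det) (μ α ν : Fin n) :
    covDeriv (GammaT τ) τ μ α ν x = covDeriv (GammaG τ) (wPart τ) μ α ν x -
      (1 / 2) * ∑ β, (connectionTorsion (GammaT τ) β μ α x * wPart τ x β ν +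
        connectionTorsion (GammaT τ) β μ ν x * wPart τ x α β) :=
  calc covDeriv (GammaT τ) τ μ α ν x
      = covDeriv (GammaT τ) (gPart τ + wPart τ) μ α ν x := by rw [gPart_add_wPart]
    _ = covDeriv (GammaT τ) (gPart τ) μ α ν x + covDeriv (GammaT τ) (wPart τ) μ α ν x :=
        covDeriv_add _ (differentiableAt_gPart (hτ α ν) (hτ ν α))
          (differentiableAt_wPart (hτ α ν) (hτ ν α)) μ
    _ = covDeriv (GammaT τ) (wPart τ) μ α ν x := by
        rw [covDeriv_GammaT_gPart hτ hg, zero_add]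
    _ = _ := covDeriv_GammaT_eq_covDeriv_GammaG_sub_torsion hτ (wPart τ) μ α ν

/-- The covariant derivative of `τ` with respect to its generalized
Levi-Civita connection differs from the `g`-covariant derivative of the antisymmetric
part `ω` by an explicit torsion term:
`∇_μ τ_{αν} = (∇g)_μ ω_{αν} − (1/2) Σ_β (T^β_{μα} ω_{βν} + T^β_{μν} ω_{αβ})`,
where `T^β_{μα} = Γ^β_{μα} − Γ^β_{αμ}` is the torsion of `τ`. -/
theorem statement8 (n : ℕ) (hn : 1 ≤ n) (U : Set (Fin n → ℝ)) (hU : IsOpen U)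
    (τ : (Fin n → ℝ) → Matrix (Fin n) (Fin n) ℝ)
    (hτ : ∀ μ ν : Fin n, ContDiffOn ℝ (⊤ : ℕ∞) (fun x => τ x μ ν) U)
    (hg : ∀ x ∈ U, IsUnit (gPart τ x).det) :
    ∀ (μ α ν : Fin n), ∀ x ∈ U,
      pd μ (fun y => τ y α ν) x -
          (∑ β, GammaT τ β μ α x * τ x β ν) -
          (∑ β, GammaT τ β μ ν x * τ x α β) =
        (pd μ (fun y => wPart τ y α ν) x -
            (∑ β, GammaG τ β μ α x * wPart τ x β ν) -
            (∑ β, GammaG τ β μ ν x * wPart τ x α β)) -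
          (1 / 2) * ∑ β, ((GammaT τ β μ α x - GammaT τ β α μ x) * wPart τ x β ν +
            (GammaT τ β μ ν x - GammaT τ β ν μ x) * wPart τ x α β) := by
  intro μ α ν x hx
  have differentiableAt_entry : ∀ α β, DifferentiableAt ℝ (fun y => τ y α β) x := fun α β =>
    ((hτ α β).contDiffAt (hU.mem_nhds hx)).differentiableAt (by simp)
  exact statement8_general differentiableAt_entry (hg x hx) μ α ν
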